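/- Let 𝒯 be a triangulated category equipped with a monoidal structure with unit 1 such that for every object E the endofunctor (−) ⊗ E is exact. If the unit 1 belongs to ⟨A⟩_n for some object A and some n ≥ 0, then every object E of 𝒯 belongs to ⟨A ⊗ E⟩_n. -/

import Mathlib

/-!
The preimage of `⟨F G⟩₁` under an exact functor `F` contains `G` and is closed under shifts, direct
sums and direct summands, so it contains `⟨G⟩₁`; since `F` preserves distinguished triangles,
induction on `n` shows that `F` maps `⟨G⟩ₙ` into `⟨F G⟩ₙ`. Applied to `F = (-) ⊗ E`, this puts
`𝟙_ C ⊗ E ≅ E` in `⟨A ⊗ E⟩ₙ`. The same argument works when `E` is an object of a triangulated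
category on which `C` acts.
-/

open CategoryTheory Limits Pretriangulated MonoidalCategory

universe v u v₂ u₂

namespace Stmt

variable {C : Type u} [Category.{v} C]

/-- `X` is a retract (direct summand) of `Y`. -/
def IsRetract (X Y : C) : Prop := ∃ (i : X ⟶ Y) (p : Y ⟶ X), i ≫ p = 𝟙 X

section Classical

variable [HasZeroObject C] [Preadditive C] [HasShift C ℤ]
  [∀ n : ℤ, (shiftFunctor C n).Additive] [Pretriangulated C] [HasBinaryBiproducts C]

/-- The objects of `⟨G⟩₁`: the smallest collection of objects containing `G` that is
closed under shifts, finite coproducts, and direct summands (retracts).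
(Closure under finite coproducts amounts to closure under binary direct sums, since the
empty coproduct `0` is a retract of any object.) -/
def classOne (G : C) : Set C :=
  ⋂₀ {S : Set C | G ∈ S ∧ (∀ X ∈ S, ∀ n : ℤ, (X⟦n⟧ : C) ∈ S) ∧
      (∀ X Y : C, X ∈ S → Y ∈ S → (X ⊞ Y) ∈ S) ∧
      (∀ X Y : C, Y ∈ S → IsRetract X Y → X ∈ S)}

/-- The objects of `⟨G⟩ₙ`: `⟨G⟩₀` consists of the objects isomorphic to `0`;
`⟨G⟩₁` is `classOne G`; for `n ≥ 2`, `⟨G⟩ₙ` consists of the direct summands of objects `E`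
fitting in a distinguished triangle `A ⟶ E ⟶ B ⟶ A⟦1⟧` with `A ∈ ⟨G⟩ₙ₋₁` and `B ∈ ⟨G⟩₁`. -/
def classLevel (G : C) : ℕ → Set C
  | 0 => {X | IsZero X}
  | 1 => classOne G
  | (n + 2) => {X | ∃ (E A B : C) (f : A ⟶ E) (g : E ⟶ B) (h : B ⟶ A⟦(1 : ℤ)⟧),
      (Triangle.mk f g h ∈ distTriang C) ∧ A ∈ classLevel G (n + 1) ∧ B ∈ classOne G ∧
      IsRetract X E}

end Classical

namespace IsRetract

variable {D : Type u₂} [Category.{v₂} D] {X Y Z : C}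

lemma of_iso (e : X ≅ Y) : IsRetract X Y := ⟨e.hom, e.inv, e.hom_inv_id⟩

lemma nonempty_retract : IsRetract X Y → Nonempty (Retract X Y)
  | ⟨i, p, hip⟩ => ⟨⟨i, p, hip⟩⟩

lemma trans (hXY : IsRetract X Y) (hYZ : IsRetract Y Z) : IsRetract X Z := by
  obtain ⟨r⟩ := hXY.nonempty_retract
  obtain ⟨s⟩ := hYZ.nonempty_retract
  exact ⟨_, _, (r.trans s).retract⟩

lemma map (h : IsRetract X Y) (F : C ⥤ D) : IsRetract (F.obj X) (F.obj Y) := by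
  obtain ⟨r⟩ := h.nonempty_retract
  exact ⟨_, _, (r.map F).retract⟩

lemma isZero [HasZeroMorphisms C] (h : IsRetract X Y) (hY : IsZero Y) : IsZero X := by
  obtain ⟨r⟩ := h.nonempty_retract
  exact .of_mono r.i hY

end IsRetract

section ClassOne

variable [Preadditive C] [HasShift C ℤ] [HasBinaryBiproducts C] {G X Y : C}

lemma self_mem_classOne (G : C) : G ∈ classOne G := fun _ hS => hS.1

lemma shift_mem_classOne (hX : X ∈ classOne G) (n : ℤ) : X⟦n⟧ ∈ classOne G :=
  fun S hS => hS.2.1 X (hX S hS) n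

lemma biprod_mem_classOne (hX : X ∈ classOne G) (hY : Y ∈ classOne G) : (X ⊞ Y) ∈ classOne G :=
  fun S hS => hS.2.2.1 X Y (hX S hS) (hY S hS)

lemma mem_classOne_of_isRetract (hY : Y ∈ classOne G) (h : IsRetract X Y) : X ∈ classOne G :=
  fun S hS => hS.2.2.2 X Y (hY S hS) h

lemma map_mem_classOne {D : Type u₂} [Category.{v₂} D] [Preadditive D] [HasShift D ℤ]
    [HasBinaryBiproducts D] (F : C ⥤ D) [F.CommShift ℤ] [F.Additive]
    (hX : X ∈ classOne G) : F.obj X ∈ classOne (F.obj G) := by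
  have := preservesBinaryBiproducts_of_preservesBiproducts F
  refine hX (F.obj ⁻¹' classOne (F.obj G)) ⟨self_mem_classOne _, ?shift, ?biprod, ?retract⟩
  case shift =>
    intro Y hY n
    exact mem_classOne_of_isRetract (shift_mem_classOne hY n) (.of_iso ((F.commShiftIso n).app Y))
  case biprod =>
    intro Y Z hY hZ
    exact mem_classOne_of_isRetract (biprod_mem_classOne hY hZ) (.of_iso (F.mapBiprod Y Z))
  case retract =>
    intro Y Z hZ h
    exact mem_classOne_of_isRetract hZ (h.map F)

end ClassOne

section ClassLevel

variable [HasZeroObject C] [Preadditive C] [HasShift C ℤ]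
  [∀ n : ℤ, (shiftFunctor C n).Additive] [Pretriangulated C] [HasBinaryBiproducts C]
  {D : Type u₂} [Category.{v₂} D] [HasZeroObject D] [Preadditive D] [HasShift D ℤ]
  [∀ n : ℤ, (shiftFunctor D n).Additive] [Pretriangulated D] [HasBinaryBiproducts D]

lemma mem_classLevel_of_isRetract {G X Y : C} :
    ∀ {n : ℕ}, Y ∈ classLevel G n → IsRetract X Y → X ∈ classLevel G n
  | 0, hY, h => h.isZero hY
  | 1, hY, h => mem_classOne_of_isRetract hY h
  | _ + 2, ⟨E, A, B, f, g, k, hT, hA, hB, hYE⟩, h =>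
    ⟨E, A, B, f, g, k, hT, hA, hB, h.trans hYE⟩

lemma map_mem_classLevel (F : C ⥤ D) [F.CommShift ℤ] [F.IsTriangulated] {G : C} :
    ∀ {n : ℕ} {X : C}, X ∈ classLevel G n → F.obj X ∈ classLevel (F.obj G) n
  | 0, _, hX => F.map_isZero hX
  | 1, _, hX => map_mem_classOne F hX
  | _ + 2, _, ⟨E, A, B, f, g, _, hT, hA, hB, hXE⟩ =>
    ⟨F.obj E, F.obj A, F.obj B, F.map f, F.map g, _, F.map_distinguished _ hT,
      map_mem_classLevel F hA, map_mem_classOne F hB, hXE.map F⟩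

open MonoidalLeftAction in
theorem statement12_general [MonoidalCategory C] [MonoidalLeftAction C D] (A : C) (E : D)
    [(actionRight C E).CommShift ℤ] [(actionRight C E).IsTriangulated]
    {n : ℕ} (h : 𝟙_ C ∈ classLevel A n) : E ∈ classLevel (A ⊙ₗ E) n :=
  mem_classLevel_of_isRetract (map_mem_classLevel (actionRight C E) h)
    (.of_iso (λₗ[C] E).symm)

end ClassLevel

/--
in a triangulated category equipped with a monoidal structure with unit
`𝟙_ C` such that for every object `E` the endofunctor `(-) ⊗ E` is exact: if
`𝟙_ C ∈ ⟨A⟩ₙ` for some object `A` and `n ≥ 0`, then every object `E` belongs to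
`⟨A ⊗ E⟩ₙ`.
-/
theorem statement12 [HasZeroObject C] [Preadditive C] [HasShift C ℤ]
    [∀ n : ℤ, (shiftFunctor C n).Additive] [Pretriangulated C] [HasBinaryBiproducts C]
    [MonoidalCategory C]
    [∀ X : C, (tensorRight X).CommShift ℤ] [∀ X : C, (tensorRight X).IsTriangulated]
    (A : C) (n : ℕ) (h1 : (𝟙_ C) ∈ classLevel A n) (E : C) :
    E ∈ classLevel (A ⊗ E) n := by
  let : (MonoidalLeftAction.actionRight C E).CommShift ℤ :=
    inferInstanceAs ((tensorRight E).CommShift ℤ)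
  have : (MonoidalLeftAction.actionRight C E).IsTriangulated :=
    inferInstanceAs ((tensorRight E).IsTriangulated)
  exact statement12_general A E h1

end Stmt
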